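/- arXiv:1801.06298 — 13 statements merged into one kernel-verified Lean document; each statement's English description precedes it below -/
import Mathlib

section
/- For every integer k ≥ 1 the coefficients B = (1−σ)R^(1−k)((N−2+k)ρ + k)/(σF), C = (σ−1)kR^(1−k)/F, D = −C satisfy the three linear transmission relations encoding that the function equal to B rᵏ Y(θ) for r ≤ R and to (C r^(2−N−k) + D rᵏ) Y(θ) for R < r ≤ 1 is the shape derivative u′_in of the state function for a degree-k spherical-harmonic perturbation of the interface: (i) vanishing on the unit sphere: C + D = 0; (ii) flux matching across r = R: σ k B R^(k−1) = (2−N−k) C R^(1−N−k) + k D R^(k−1); (iii) prescribed jump across r = R: (C R^(2−N−k) + D Rᵏ) − B Rᵏ = R(σ−1)/(Nσ). -/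
/-!
Since `0 < R < 1` and the exponent `2 - N - 2k` is negative, `ρ ≥ 1`, which gives `F > 0`, so no
denominator vanishes. Writing `p = R ^ (1 - k)`, every power of `R` that occurs is a monomial in
`R`, `ρ` and `p⁻¹`, and `p` cancels against the factor `R ^ (1 - k)` in `B`, `C`, `D`. The flux
relation is then a rational identity for every value of `F`; only the jump relation uses the
formula for `F`, because its left side collects to `R (σ - 1) / (σ F)` times `F / N`.
-/

/-- The coefficients `B = (1-σ) R^(1-k) ((N-2+k) ρ + k) / (σ F)`,
`C = (σ-1) k R^(1-k) / F`, `D = -C`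
(with `ρ = R^(2-N-2k)` and `F = N (N-2+k+kσ) ρ + k N (1-σ)`) satisfy the three linear
transmission relations characterizing the shape derivative `u'_in` of the state function
for a degree-`k` spherical-harmonic perturbation of the interface:
(i) vanishing on the unit sphere, (ii) flux matching across `r = R`,
(iii) the prescribed jump `R (σ-1) / (N σ)` across `r = R`. -/
theorem transmission_relations_in (N : ℕ) (hN : 2 ≤ N) (σ R : ℝ) (hσ : 0 < σ)
    (hR0 : 0 < R) (hR1 : R < 1) (k : ℕ) (hk : 1 ≤ k)
    (ρ F B C D : ℝ)
    (hρ : ρ = R ^ ((2 : ℝ) - N - 2 * k))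
    (hF : F = (N : ℝ) * ((N : ℝ) - 2 + k + k * σ) * ρ + k * N * (1 - σ))
    (hB : B = (1 - σ) * R ^ ((1 : ℝ) - k) * (((N : ℝ) - 2 + k) * ρ + k) / (σ * F))
    (hC : C = (σ - 1) * k * R ^ ((1 : ℝ) - k) / F)
    (hD : D = -C) :
    C + D = 0
    ∧ σ * k * B * R ^ ((k : ℝ) - 1)
        = (2 - (N : ℝ) - k) * C * R ^ ((1 : ℝ) - N - k) + k * D * R ^ ((k : ℝ) - 1)
    ∧ (C * R ^ ((2 : ℝ) - N - k) + D * R ^ (k : ℝ)) - B * R ^ (k : ℝ)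
        = R * (σ - 1) / (N * σ) := by
  have hk' : (1 : ℝ) ≤ k := by exact_mod_cast hk
  have hN' : (2 : ℝ) ≤ N := by exact_mod_cast hN
  have hρ1 : 1 ≤ ρ := by
    rw [hρ]
    exact Real.one_le_rpow_of_pos_of_le_one_of_nonpos hR0 hR1.le (by linarith)
  have hFpos : 0 < F := by
    have hkσ : 0 < (k : ℝ) * σ := by positivity
    -- `F / N` increases in `ρ`, and its value at `ρ = 1` is `N - 2 + 2 k`.
    have h1 : 0 ≤ ((N : ℝ) - 2 + k + k * σ) * (ρ - 1) :=
      mul_nonneg (by linarith) (by linarith)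
    have h2 : F = N * (((N : ℝ) - 2 + k + k * σ) * (ρ - 1) + (N - 2 + 2 * k)) := by
      rw [hF]; ring
    rw [h2]
    exact mul_pos (by linarith) (by linarith)
  obtain ⟨p, hp⟩ : ∃ p, p = R ^ ((1 : ℝ) - k) := ⟨_, rfl⟩
  have hp0 : 0 < p := hp ▸ Real.rpow_pos_of_pos hR0 _
  -- All powers of `R` in the relations are monomials in `R`, `ρ` and `p⁻¹`.
  have e1 : R ^ ((k : ℝ) - 1) = 1 / p := by
    rw [hp, one_div, ← Real.rpow_neg hR0.le, neg_sub]
  have e2 : R ^ ((1 : ℝ) - N - k) = ρ / p := by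
    rw [hp, hρ, ← Real.rpow_sub hR0]; congr 1; ring
  have e3 : R ^ (k : ℝ) = R / p := by
    rw [div_eq_mul_one_div, ← e1, Real.rpow_sub_one hR0.ne']; field_simp
  have e4 : R ^ ((2 : ℝ) - N - k) = R * ρ / p := by
    rw [mul_div_assoc, ← e2, mul_comm, ← Real.rpow_add_one hR0.ne']; congr 1; ring
  rw [e1, e2, e3, e4]
  rw [← hp] at hB hC
  have hN0 : (N : ℝ) ≠ 0 := by linarith
  refine ⟨by rw [hD]; ring, ?_, ?_⟩
  · rw [hD, hB, hC]
    field_simp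
    ring
  · -- The left side is `R (σ - 1) / (σ F)` times `F / N`.
    have key : (C * (R * ρ / p) + D * (R / p)) - B * (R / p)
        = R * (σ - 1) / (N * σ) * ((N * ((N : ℝ) - 2 + k + k * σ) * ρ + k * N * (1 - σ)) / F) := by
      rw [hD, hB, hC]
      field_simp
      ring
    rw [key, ← hF, div_self hFpos.ne', mul_one]
end

section
/- At degree k = 1, for every real number t one has E″_in(1)·t² + E″_res(1)·t + E″_out(1) = (2(1−σ)/F(1))·(t−1)². In particular E″_res(1) = 4(σ−1)/F(1), and for σ > 1 this quadratic is ≤ 0 for all t with equality exactly at t = 1. -/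
/-!
At `k = 1` one has `ρ 1 = R⁻ᴺ =: P`, which exceeds `1` because `0 < R < 1`. Hence
`F 1 = N ((N - 1 + σ) P + 1 - σ)` is positive for every `σ > 0`, and
`F 1 / N - (1 - σ) ((N - 1) P + 1) = N σ P`. The factor `P` cancels against `R ^ N`, so
`Ein 1 = Eout 1 = 2 (1 - σ) / F 1`, while `Eres 1 = -4 (1 - σ) / F 1`: the quadratic is a
perfect square times a constant, which is negative for `σ > 1`.
-/

/-- At degree `k = 1`, for every real `t` one has
`E''_in(1) t² + E''_res(1) t + E''_out(1) = (2 (1-σ) / F(1)) (t-1)²`.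
In particular `E''_res(1) = 4 (σ-1) / F(1)`, and for `σ > 1` this quadratic is `≤ 0` for
all `t`, with equality exactly at `t = 1`. -/
theorem degree_one_quadratic (N : ℕ) (hN : 2 ≤ N) (σ R : ℝ) (hσ : 0 < σ)
    (hR0 : 0 < R) (hR1 : R < 1)
    (ρ F Ein Eout Eres : ℝ → ℝ)
    (hρ : ∀ k, ρ k = R ^ ((2 : ℝ) - N - 2 * k))
    (hF : ∀ k, F k = (N : ℝ) * ((N : ℝ) - 2 + k + k * σ) * ρ k + k * N * (1 - σ))
    (hEin : ∀ k, Ein k = (2 * R ^ N * (1 - σ) / (N * σ * F k))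
        * (F k / N - k * (1 - σ) * (((N : ℝ) - 2 + k) * ρ k + k)))
    (hEout : ∀ k, Eout k = (2 / (N * F k))
        * (k * ((N : ℝ) - 1 + k) * (1 - σ) + (1 - k) * ((N : ℝ) - 2 + k + k * σ) * ρ k))
    (hEres : ∀ k, Eres k = (4 * (σ - 1) * R ^ ((1 : ℝ) - k) / (N * F k))
        * (((N : ℝ) - 2) * k + 2 * k ^ 2)) :
    (∀ t : ℝ, Ein 1 * t ^ 2 + Eres 1 * t + Eout 1 = (2 * (1 - σ) / F 1) * (t - 1) ^ 2)
    ∧ Eres 1 = 4 * (σ - 1) / F 1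
    ∧ (1 < σ → ∀ t : ℝ, Ein 1 * t ^ 2 + Eres 1 * t + Eout 1 ≤ 0
        ∧ (Ein 1 * t ^ 2 + Eres 1 * t + Eout 1 = 0 ↔ t = 1)) := by
  have hN' : (2 : ℝ) ≤ N := by exact_mod_cast hN
  have hN0 : (N : ℝ) ≠ 0 := by positivity
  have hρ1 : ρ 1 = (R ^ N)⁻¹ := by
    rw [hρ, show (2 : ℝ) - N - 2 * 1 = -(N : ℝ) by ring, Real.rpow_neg hR0.le,
      Real.rpow_natCast]
  have hRN : 0 < R ^ N := by positivity
  have hP : 1 < ρ 1 := by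
    rw [hρ1]
    exact (one_lt_inv₀ hRN).2 (pow_lt_one₀ hR0.le hR1 (by lia))
  have hRP : R ^ N * ρ 1 = 1 := by
    rw [hρ1]
    exact mul_inv_cancel₀ hRN.ne'
  have hF1 : F 1 = N * (((N : ℝ) - 1 + σ) * ρ 1 + 1 - σ) := by
    rw [hF]
    ring
  have hFpos : 0 < F 1 := by
    rw [hF1]
    have h : 0 < ((N : ℝ) - 1 + σ) * (ρ 1 - 1) := mul_pos (by linarith) (by linarith)
    exact mul_pos (by linarith) (by linarith)
  have hin : Ein 1 = 2 * (1 - σ) / F 1 := by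
    have hbracket : F 1 / N - 1 * (1 - σ) * (((N : ℝ) - 2 + 1) * ρ 1 + 1) = N * σ * ρ 1 := by
      rw [hF1, mul_div_cancel_left₀ _ hN0]
      ring
    rw [hEin, hbracket]
    calc 2 * R ^ N * (1 - σ) / (N * σ * F 1) * (N * σ * ρ 1)
        = 2 * (1 - σ) / F 1 * (R ^ N * ρ 1) := by field_simp
      _ = 2 * (1 - σ) / F 1 := by rw [hRP, mul_one]
  have hout : Eout 1 = 2 * (1 - σ) / F 1 := by
    rw [hEout]
    field_simp
    ring
  have hres : Eres 1 = 4 * (σ - 1) / F 1 := by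
    rw [hEres, sub_self, Real.rpow_zero]
    field_simp
    ring
  have hquad : ∀ t : ℝ,
      Ein 1 * t ^ 2 + Eres 1 * t + Eout 1 = (2 * (1 - σ) / F 1) * (t - 1) ^ 2 := by
    intro t
    rw [hin, hout, hres]
    ring
  refine ⟨hquad, hres, fun hσ1 t => ?_⟩
  have hneg : 2 * (1 - σ) / F 1 < 0 := div_neg_of_neg_of_pos (by linarith) hFpos
  rw [hquad]
  refine ⟨mul_nonpos_of_nonpos_of_nonneg hneg.le (sq_nonneg _), ?_⟩
  rw [mul_eq_zero, or_iff_right hneg.ne, sq_eq_zero_iff, sub_eq_zero]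
end

section
/- For every σ > 0 the function x ↦ E″_out(x) is strictly decreasing on the interval (0, ∞). -/
/-!
Put `s = 1 - σ < 1`, `t = N - 2 + 2 x ≥ 2 x`, `L = -log R > 0`, so that `ρ = exp (L t)`.
Since `N - 2 + x + x σ = t - s x`, one has `F = N Q` with `Q = t ρ - s x (ρ - 1)`, and
`E''_out = (2 / N²) (1 - x + s x t / Q)`.
The derivative of the bracket is `-K / Q²`, where
`K = t ρ (t ρ - 2 s x (ρ - 1) - s t + 2 s L x t) + s² x² (ρ² - 1 - 2 L t ρ)`.
The last summand is nonnegative because `y ≤ sinh y` at `y = L t`. For `s ≤ 0` the first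
factor in parentheses is positive because `y ≤ exp y - 1`; for `0 < s < 1` it is at least
`t ρ (1 - s)` because `2 x ≤ t`. Hence `K > 0` (`numerator_pos`).
-/

/-- The inequality `y ≤ sinh y` multiplied by `2 exp y`. -/
lemma two_mul_mul_exp_le {y : ℝ} (hy : 0 ≤ y) :
    2 * y * Real.exp y ≤ Real.exp y ^ 2 - 1 := by
  have h := Real.self_le_sinh_iff.2 hy
  rw [Real.sinh_eq] at h
  have h1 : Real.exp y * Real.exp (-y) = 1 := by rw [← Real.exp_add]; simp
  nlinarith [Real.exp_pos y]

lemma denominator_pos {s x t r : ℝ} (hs : s < 1) (hx : 0 < x) (ht : 2 * x ≤ t) (hr : 1 ≤ r) :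
    0 < t * r - s * x * (r - 1) := by
  have h1 : 0 ≤ (1 - s) * (x * (r - 1)) :=
    mul_nonneg (by linarith) (mul_nonneg hx.le (by linarith))
  nlinarith [mul_le_mul_of_nonneg_right ht (by linarith : 0 ≤ r), mul_pos hx (by linarith : 0 < r)]

/-- Positivity of `-Q²` times the derivative of `1 - x + s x t / Q`; here `r` stands for
`ρ = exp (L t)`, of which only the bounds `hexp` and `hsinh` are used. -/
lemma numerator_pos {s x t r L : ℝ} (hs : s < 1) (hx : 0 < x) (ht : 2 * x ≤ t) (hL : 0 < L)
    (hexp : L * t ≤ r - 1) (hsinh : 2 * (L * t) * r ≤ r ^ 2 - 1) :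
    0 < t * r * (t * r - 2 * s * x * (r - 1) - s * t + 2 * s * L * x * t)
      + s ^ 2 * x ^ 2 * (r ^ 2 - 1 - 2 * (L * t) * r) := by
  have ht0 : 0 < t := by linarith
  have hLt : 0 < L * t := mul_pos hL ht0
  have hr : 1 < r := by linarith
  have htr : 0 < t * r := mul_pos ht0 (by linarith)
  refine add_pos_of_pos_of_nonneg (mul_pos htr ?_) (mul_nonneg (by positivity) (by linarith))
  rcases le_or_gt s 0 with h | h
  · have h1 : 0 ≤ -s * (2 * x * (r - 1 - L * t)) :=
      mul_nonneg (by linarith) (mul_nonneg (by linarith) (by linarith))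
    have h2 : 0 ≤ -s * t := mul_nonneg (by linarith) ht0.le
    linarith
  · have h1 : 0 ≤ s * ((t - 2 * x) * (r - 1)) :=
      mul_nonneg h.le (mul_nonneg (by linarith) (by linarith))
    have h2 : 0 < (1 - s) * (t * r) := mul_pos (by linarith) htr
    have h3 : 0 < s * x * (L * t) := by positivity
    linarith

lemma strictAntiOn_normalized {M s L : ℝ} (hM : 0 ≤ M) (hs : s < 1) (hL : 0 < L) :
    StrictAntiOn (fun x : ℝ => 1 - x + s * x * (M + 2 * x) /
      ((M + 2 * x) * Real.exp (L * (M + 2 * x)) - s * x * (Real.exp (L * (M + 2 * x)) - 1)))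
      (Set.Ioi 0) := by
  have key : ∀ x : ℝ, 0 < x → ∃ d < 0, HasDerivAt (fun x : ℝ => 1 - x + s * x * (M + 2 * x) /
      ((M + 2 * x) * Real.exp (L * (M + 2 * x)) - s * x * (Real.exp (L * (M + 2 * x)) - 1)))
      d x := by
    intro x hx
    have ht : HasDerivAt (fun x : ℝ => M + 2 * x) 2 x := by
      simpa using ((hasDerivAt_id x).const_mul 2).const_add M
    have hr := (ht.const_mul L).exp
    have hsx : HasDerivAt (fun x : ℝ => s * x) s x := by
      simpa using (hasDerivAt_id x).const_mul s
    have htx : 2 * x ≤ M + 2 * x := by linarith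
    have hLt : 0 ≤ L * (M + 2 * x) := by positivity
    have hQ := denominator_pos hs hx htx (Real.one_le_exp hLt)
    have hK := numerator_pos hs hx htx hL
      (by linarith [Real.add_one_le_exp (L * (M + 2 * x))]) (two_mul_mul_exp_le hLt)
    have hd := ((hasDerivAt_id x).const_sub 1).add
      ((hsx.mul ht).div ((ht.mul hr).sub (hsx.mul (hr.sub_const 1))) hQ.ne')
    refine ⟨_, ?_, hd⟩
    simp only [Pi.mul_apply, Pi.sub_apply]
    rw [neg_add_lt_iff_lt_add, add_zero, div_lt_one (pow_pos hQ 2)]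
    linarith
  refine strictAntiOn_of_deriv_neg (convex_Ioi 0) ?_ ?_
  · intro x hx
    obtain ⟨d, -, h⟩ := key x hx
    exact h.continuousAt.continuousWithinAt
  · intro x hx
    rw [interior_Ioi] at hx
    obtain ⟨d, hd, h⟩ := key x hx
    rwa [h.deriv]

/-- For every `σ > 0`, the function `x ↦ E''_out(x)` is strictly decreasing on `(0, ∞)`. -/
theorem Eout_strictAntiOn (N : ℕ) (hN : 2 ≤ N) (σ R : ℝ) (hσ : 0 < σ)
    (hR0 : 0 < R) (hR1 : R < 1)
    (ρ F Eout : ℝ → ℝ)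
    (hρ : ∀ x, ρ x = R ^ ((2 : ℝ) - N - 2 * x))
    (hF : ∀ x, F x = (N : ℝ) * ((N : ℝ) - 2 + x + x * σ) * ρ x + x * N * (1 - σ))
    (hEout : ∀ x, Eout x = (2 / (N * F x))
        * (x * ((N : ℝ) - 1 + x) * (1 - σ) + (1 - x) * ((N : ℝ) - 2 + x + x * σ) * ρ x)) :
    StrictAntiOn Eout (Set.Ioi 0) := by
  have hN' : (2 : ℝ) ≤ N := by exact_mod_cast hN
  have hL : 0 < -Real.log R := neg_pos.2 (Real.log_neg hR0 hR1)
  have hs : 1 - σ < 1 := by linarith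
  have hM : (0 : ℝ) ≤ N - 2 := by linarith
  have hc : (0 : ℝ) < 2 / N ^ 2 := by positivity
  have hG := strictAntiOn_normalized hM hs hL
  have hanti : StrictAntiOn (fun x : ℝ => 2 / (N : ℝ) ^ 2 * (1 - x +
      (1 - σ) * x * ((N : ℝ) - 2 + 2 * x) /
      (((N : ℝ) - 2 + 2 * x) * Real.exp (-Real.log R * ((N : ℝ) - 2 + 2 * x))
        - (1 - σ) * x * (Real.exp (-Real.log R * ((N : ℝ) - 2 + 2 * x)) - 1)))) (Set.Ioi 0) :=
    fun a ha b hb hab => mul_lt_mul_of_pos_left (hG ha hb hab) hc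
  refine hanti.congr fun x (hx : 0 < x) => ?_
  have hr : ρ x = Real.exp (-Real.log R * ((N : ℝ) - 2 + 2 * x)) := by
    rw [hρ, Real.rpow_def_of_pos hR0]
    congr 1
    ring
  have hQ := denominator_pos hs hx (by linarith : 2 * x ≤ (N : ℝ) - 2 + 2 * x)
    (Real.one_le_exp (mul_nonneg hL.le (by linarith : 0 ≤ (N : ℝ) - 2 + 2 * x)))
  simp only [hEout, hF]
  rw [← hr] at hQ ⊢
  have hFQ : (N : ℝ) * ((N : ℝ) - 2 + x + x * σ) * ρ x + x * N * (1 - σ)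
      = N * (((N : ℝ) - 2 + 2 * x) * ρ x - (1 - σ) * x * (ρ x - 1)) := by ring
  rw [hFQ]
  have hN0 : (N : ℝ) ≠ 0 := by linarith
  generalize hq : ((N : ℝ) - 2 + 2 * x) * ρ x - (1 - σ) * x * (ρ x - 1) = q at hQ ⊢
  have hq0 := hQ.ne'
  field_simp
  rw [← hq]
  ring
end

section
/- If σ ≠ 1 then the function x ↦ E″_in(x) is strictly decreasing on the interval (0, ∞), while for σ = 1 it is identically zero. -/
/-!
Write `M = N - 2`, `p = ρ(x)` and `A = (M + x) p + x`. Then `F / N = A + x σ (p - 1)`, so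
`Ein(x) = c (1 - σ) - c (1 - σ)² H(x)` for a constant `c > 0`, where
`1 / H(x) = 1 / x + σ (p - 1) / A`. It therefore suffices that `A / (p - 1)` is nondecreasing.
Since `2 A = M (p - 1) + (M + 2 x) (p + 1)` and `p = exp (L (M + 2 x))` with `L = -log R > 0`,
this amounts to the monotonicity of `u ↦ u coth (u / 2)` (`mul_coth_mono`), which after cross
multiplication is an instance of `sinh d / d ≤ sinh s / s` for `0 < d ≤ s`, a consequence of the
convexity of `sinh` on `[0, ∞)`.
-/

theorem sinh_convexOn_Ici : ConvexOn ℝ (Set.Ici 0) Real.sinh := by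
  refine MonotoneOn.convexOn_of_deriv (convex_Ici 0) Real.continuous_sinh.continuousOn
    Real.differentiable_sinh.differentiableOn ?_
  rw [Real.deriv_sinh, interior_Ici]
  intro a ha b hb hab
  rw [Real.cosh_le_cosh, abs_of_pos ha, abs_of_pos hb]
  exact hab

theorem mul_sinh_le {d s : ℝ} (hd : 0 ≤ d) (hds : d ≤ s) :
    s * Real.sinh d ≤ d * Real.sinh s := by
  rcases (hd.trans hds).eq_or_lt with hs | hs
  · have : d = 0 := by linarith
    simp [this, ← hs]
  · have hk : d / s ≤ 1 := (div_le_one hs).2 hds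
    -- `d` is the convex combination `(d / s) • s + (1 - d / s) • 0`.
    have h := sinh_convexOn_Ici.2 (Set.mem_Ici.2 hs.le) (Set.mem_Ici.2 le_rfl)
      (div_nonneg hd hs.le) (sub_nonneg.2 hk) (by ring)
    simp only [smul_eq_mul, mul_zero, add_zero, Real.sinh_zero, div_mul_cancel₀ d hs.ne'] at h
    calc s * Real.sinh d ≤ s * (d / s * Real.sinh s) := mul_le_mul_of_nonneg_left h hs.le
      _ = d * Real.sinh s := by field_simp

/-- The function `u ↦ u coth (u / 2) = u (exp u + 1) / (exp u - 1)` is nondecreasing for `u > 0`,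
in cross-multiplied form (which also holds trivially for `a = 0`). -/
theorem mul_coth_mono {a b : ℝ} (ha : 0 ≤ a) (hab : a ≤ b) :
    a * (Real.exp a + 1) * (Real.exp b - 1) ≤ b * (Real.exp b + 1) * (Real.exp a - 1) := by
  have h := mul_sinh_le (d := (b - a) / 2) (s := (a + b) / 2) (by linarith) (by linarith)
  rw [Real.sinh_eq, Real.sinh_eq] at h
  have e1 : Real.exp ((b - a) / 2) = Real.exp (b / 2) * Real.exp (-(a / 2)) := by
    rw [← Real.exp_add]; ring_nf
  have e2 : Real.exp (-((b - a) / 2)) = Real.exp (-(b / 2)) * Real.exp (a / 2) := by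
    rw [← Real.exp_add]; ring_nf
  have e3 : Real.exp ((a + b) / 2) = Real.exp (b / 2) * Real.exp (a / 2) := by
    rw [← Real.exp_add]; ring_nf
  have e4 : Real.exp (-((a + b) / 2)) = Real.exp (-(b / 2)) * Real.exp (-(a / 2)) := by
    rw [← Real.exp_add]; ring_nf
  have e5 : Real.exp a = Real.exp (a / 2) ^ 2 := by
    rw [← Real.exp_nat_mul]; ring_nf
  have e6 : Real.exp b = Real.exp (b / 2) ^ 2 := by
    rw [← Real.exp_nat_mul]; ring_nf
  rw [e1, e2, e3, e4, Real.exp_neg, Real.exp_neg] at h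
  rw [e5, e6]
  have hA := Real.exp_pos (a / 2)
  have hB := Real.exp_pos (b / 2)
  generalize Real.exp (a / 2) = A at *
  generalize Real.exp (b / 2) = B at *
  have h' := mul_le_mul_of_nonneg_left h (mul_pos hA hB).le
  have l1 : A * B * ((a + b) / 2 * ((B * A⁻¹ - B⁻¹ * A) / 2)) =
      (a + b) * (B ^ 2 - A ^ 2) / 4 := by field_simp; ring
  have l2 : A * B * ((b - a) / 2 * ((B * A - B⁻¹ * A⁻¹) / 2)) =
      (b - a) * (A ^ 2 * B ^ 2 - 1) / 4 := by field_simp; ring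
  rw [l1, l2] at h'
  linarith

/-- If `σ ≠ 1`, the function `x ↦ E''_in(x)` is strictly decreasing on `(0, ∞)`,
while for `σ = 1` it is identically zero there. -/
theorem Ein_strictAntiOn (N : ℕ) (hN : 2 ≤ N) (σ R : ℝ) (hσ : 0 < σ)
    (hR0 : 0 < R) (hR1 : R < 1)
    (ρ F Ein : ℝ → ℝ)
    (hρ : ∀ x, ρ x = R ^ ((2 : ℝ) - N - 2 * x))
    (hF : ∀ x, F x = (N : ℝ) * ((N : ℝ) - 2 + x + x * σ) * ρ x + x * N * (1 - σ))
    (hEin : ∀ x, Ein x = (2 * R ^ N * (1 - σ) / (N * σ * F x))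
        * (F x / N - x * (1 - σ) * (((N : ℝ) - 2 + x) * ρ x + x))) :
    (σ ≠ 1 → StrictAntiOn Ein (Set.Ioi 0))
    ∧ (σ = 1 → ∀ x ∈ Set.Ioi (0 : ℝ), Ein x = 0) := by
  refine ⟨fun hσ1 x hx y hy hxy => ?_, fun h x _ => by rw [hEin, h]; simp⟩
  have hx : 0 < x := hx
  have hy : 0 < y := hy
  have hN2 : (2 : ℝ) ≤ N := by exact_mod_cast hN
  have hN0 : (0 : ℝ) < N := by linarith
  obtain ⟨M, hM⟩ : ∃ M : ℝ, M = (N : ℝ) - 2 := ⟨_, rfl⟩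
  have hM0 : 0 ≤ M := by linarith
  have hL : 0 < -Real.log R := neg_pos.2 (Real.log_neg hR0 hR1)
  have hexp : ∀ z, ρ z = Real.exp (-Real.log R * (M + 2 * z)) := fun z => by
    rw [hρ, Real.rpow_def_of_pos hR0, hM]; ring_nf
  have hone : ∀ z, 0 < z → 1 < ρ z := fun z hz => by
    rw [hexp, Real.one_lt_exp_iff]; positivity
  have hp := hone x hx
  have hq := hone y hy
  have hcoth : (M + 2 * x) * (ρ x + 1) * (ρ y - 1) ≤ (M + 2 * y) * (ρ y + 1) * (ρ x - 1) := by
    have h := mul_coth_mono (a := -Real.log R * (M + 2 * x)) (b := -Real.log R * (M + 2 * y))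
      (by positivity) (mul_le_mul_of_nonneg_left (by linarith) hL.le)
    rw [← hexp, ← hexp] at h
    refine le_of_mul_le_mul_left ?_ hL
    linarith
  have hAB : (ρ y - 1) * ((M + x) * ρ x + x) ≤ (ρ x - 1) * ((M + y) * ρ y + y) := by
    linarith
  have hEin' : ∀ z, 0 < z → Ein z = 2 * R ^ N * (1 - σ) / (N ^ 2 * σ)
      - 2 * R ^ N * (1 - σ) ^ 2 / (N ^ 2 * σ) *
        (z * ((M + z) * ρ z + z) / ((M + z) * ρ z + z + z * σ * (ρ z - 1))) := fun z hz => by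
    have hr := sub_pos.2 (hone z hz)
    have hr0 : 0 < ρ z := by linarith
    have hG : 0 < (M + z) * ρ z + z + z * σ * (ρ z - 1) := by positivity
    have hFz : F z = N * ((M + z) * ρ z + z + z * σ * (ρ z - 1)) := by
      rw [hF, hM]; ring
    rw [hEin, hFz, ← hM]
    field_simp
  have hp1 := sub_pos.2 hp
  have hq1 := sub_pos.2 hq
  have hp0 : 0 < ρ x := by linarith
  have hq0 : 0 < ρ y := by linarith
  have hA : 0 < (M + x) * ρ x + x := by positivity
  have hB : 0 < (M + y) * ρ y + y := by positivity
  rw [hEin' x hx, hEin' y hy]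
  refine sub_lt_sub_left (mul_lt_mul_of_pos_left ?_ ?_) _
  · rw [div_lt_div_iff₀ (by positivity) (by positivity)]
    have h1 := mul_lt_mul_of_pos_right hxy (mul_pos hA hB)
    have h2 := mul_le_mul_of_nonneg_left hAB (mul_pos (mul_pos hx hy) hσ).le
    linarith
  · have : 0 < (1 - σ) ^ 2 := by
      have := sub_ne_zero.2 hσ1.symm
      positivity
    positivity
end

section
/- If σ > 1 then E″_in(k) < 0 for every integer k ≥ 1. -/
/-!
Writing `m = N - 2 ≥ 0`, one has `F(k) / N = (m + k) ρ + k σ (ρ - 1) + k`, which is positive because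
`ρ > 1` (a negative power of `R < 1`). For `σ > 1` the second factor of `Ein k` is therefore a sum
of two positive terms, while the prefactor has the sign of `1 - σ < 0`.
-/

/-- If `σ > 1` then `E''_in(k) < 0` for every integer `k ≥ 1`. -/
theorem Ein_neg_of_sigma_gt_one (N : ℕ) (hN : 2 ≤ N) (σ R : ℝ) (hσ : 1 < σ)
    (hR0 : 0 < R) (hR1 : R < 1)
    (ρ F Ein : ℝ → ℝ)
    (hρ : ∀ k, ρ k = R ^ ((2 : ℝ) - N - 2 * k))
    (hF : ∀ k, F k = (N : ℝ) * ((N : ℝ) - 2 + k + k * σ) * ρ k + k * N * (1 - σ))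
    (hEin : ∀ k, Ein k = (2 * R ^ N * (1 - σ) / (N * σ * F k))
        * (F k / N - k * (1 - σ) * (((N : ℝ) - 2 + k) * ρ k + k))) :
    ∀ k : ℕ, 1 ≤ k → Ein k < 0 := by
  intro k hk
  have hk1 : (1 : ℝ) ≤ k := by exact_mod_cast hk
  have hN2 : (2 : ℝ) ≤ N := by exact_mod_cast hN
  have hNpos : (0 : ℝ) < N := by linarith
  have hkpos : (0 : ℝ) < k := by linarith
  have hρ1 : 1 < ρ k := by
    rw [hρ]
    exact Real.one_lt_rpow_of_pos_of_lt_one_of_neg hR0 hR1 (by linarith)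
  have hA : 0 < ((N : ℝ) - 2 + k) * ρ k + k := by
    have : 0 ≤ ((N : ℝ) - 2 + k) * ρ k := mul_nonneg (by linarith) (by linarith)
    linarith
  have hFpos : 0 < F k := by
    have h1 : F k = N * ((((N : ℝ) - 2 + k) * ρ k + k) + k * σ * (ρ k - 1)) := by
      rw [hF]; ring
    have h2 : 0 < k * σ * (ρ k - 1) :=
      mul_pos (mul_pos hkpos (by linarith)) (by linarith)
    rw [h1]
    exact mul_pos hNpos (by linarith)
  rw [hEin]
  apply mul_neg_of_neg_of_pos
  · apply div_neg_of_neg_of_pos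
    · exact mul_neg_of_pos_of_neg (by positivity) (by linarith)
    · exact mul_pos (mul_pos hNpos (by linarith)) hFpos
  · have h1 : 0 < F k / N := div_pos hFpos hNpos
    have h2 : 0 < k * (σ - 1) * (((N : ℝ) - 2 + k) * ρ k + k) :=
      mul_pos (mul_pos hkpos (by linarith)) hA
    linarith
end

section
/- If σ > 1 then E″_out(k) < 0 for every integer k ≥ 1. -/
/-!
Since `0 < R < 1` and `2 - N - 2k ≤ 0`, one has `ρ k ≥ 1`; as `N - 2 + k + kσ > 0`, this gives
`F k ≥ N (N - 2 + k + kσ) + kN (1 - σ) = N (N - 2 + 2k) > 0`, so the prefactor `2 / (N F k)` is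
positive. In the other factor the first term is negative because `σ > 1`, and the second is
nonpositive because `k ≥ 1`.
-/

/-- If `σ > 1` then `E''_out(k) < 0` for every integer `k ≥ 1`. -/
theorem Eout_neg_of_sigma_gt_one (N : ℕ) (hN : 2 ≤ N) (σ R : ℝ) (hσ : 1 < σ)
    (hR0 : 0 < R) (hR1 : R < 1)
    (ρ F Eout : ℝ → ℝ)
    (hρ : ∀ k, ρ k = R ^ ((2 : ℝ) - N - 2 * k))
    (hF : ∀ k, F k = (N : ℝ) * ((N : ℝ) - 2 + k + k * σ) * ρ k + k * N * (1 - σ))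
    (hEout : ∀ k, Eout k = (2 / (N * F k))
        * (k * ((N : ℝ) - 1 + k) * (1 - σ) + (1 - k) * ((N : ℝ) - 2 + k + k * σ) * ρ k)) :
    ∀ k : ℕ, 1 ≤ k → Eout k < 0 := by
  intro k hk
  have hN' : (2 : ℝ) ≤ N := by exact_mod_cast hN
  have hk' : (1 : ℝ) ≤ k := by exact_mod_cast hk
  have hρ1 : 1 ≤ ρ k := by
    rw [hρ]
    exact Real.one_le_rpow_of_pos_of_le_one_of_nonpos hR0 hR1.le (by linarith)
  have hA : 0 < (N : ℝ) - 2 + k + k * σ := by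
    have : 0 < (k : ℝ) * σ := by positivity
    linarith
  have hFpos : 0 < F k := by
    have hAρ := mul_le_mul_of_nonneg_left hρ1 hA.le
    have hN0 : (0 : ℝ) < N := by linarith
    have hFk : F k = N * (((N : ℝ) - 2 + k + k * σ) * ρ k + k * (1 - σ)) := by
      rw [hF]; ring
    rw [hFk]
    exact mul_pos hN0 (by linarith)
  rw [hEout]
  apply mul_neg_of_pos_of_neg
  · positivity
  · have h1 : (k : ℝ) * ((N : ℝ) - 1 + k) * (1 - σ) < 0 :=
      mul_neg_of_pos_of_neg (mul_pos (by linarith) (by linarith)) (by linarith)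
    have h2 : (1 - (k : ℝ)) * ((N : ℝ) - 2 + k + k * σ) * ρ k ≤ 0 :=
      mul_nonpos_of_nonpos_of_nonneg
        (mul_nonpos_of_nonpos_of_nonneg (by linarith) hA.le) (by linarith)
    linarith
end

section
/- If 0 < σ < 1 then E″_in(1) > 0 and E″_out(1) > 0; hence for σ < 1 there are degree-one spherical-harmonic perturbations of the interface along which the second derivative of the torsional rigidity is positive. -/
/-!
At `k = 1` both coefficients collapse. Writing `r = ρ 1 > 0`, one has
`F 1 / N = (N - 1 + σ) r + (1 - σ)`, which is positive, and subtracting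
`(1 - σ) ((N - 1) r + 1)` leaves exactly `N σ r`; this is the second factor of `Ein 1`.
In `Eout 1` the term carrying `1 - k` drops out and the second factor is `N (1 - σ)`.
-/


/-- If `0 < σ < 1` then `E''_in(1) > 0` and `E''_out(1) > 0`; hence for `σ < 1` there are
degree-one spherical-harmonic perturbations of the interface along which the second
derivative of the torsional rigidity is positive. -/
theorem Ein_Eout_pos_of_sigma_lt_one (N : ℕ) (hN : 2 ≤ N) (σ R : ℝ)
    (hσ0 : 0 < σ) (hσ1 : σ < 1) (hR0 : 0 < R) (hR1 : R < 1)
    (ρ F Ein Eout : ℝ → ℝ)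
    (hρ : ∀ k, ρ k = R ^ ((2 : ℝ) - N - 2 * k))
    (hF : ∀ k, F k = (N : ℝ) * ((N : ℝ) - 2 + k + k * σ) * ρ k + k * N * (1 - σ))
    (hEin : ∀ k, Ein k = (2 * R ^ N * (1 - σ) / (N * σ * F k))
        * (F k / N - k * (1 - σ) * (((N : ℝ) - 2 + k) * ρ k + k)))
    (hEout : ∀ k, Eout k = (2 / (N * F k))
        * (k * ((N : ℝ) - 1 + k) * (1 - σ) + (1 - k) * ((N : ℝ) - 2 + k + k * σ) * ρ k)) :
    0 < Ein 1 ∧ 0 < Eout 1 := by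
  have hN' : (2 : ℝ) ≤ N := by exact_mod_cast hN
  have hNpos : (0 : ℝ) < N := by linarith
  have hr : 0 < ρ 1 := by rw [hρ]; exact Real.rpow_pos_of_pos hR0 _
  have hs : 0 < 1 - σ := by linarith
  have hF1 : F 1 = N * ((N - 1 + σ) * ρ 1 + (1 - σ)) := by rw [hF]; ring
  have hFpos : 0 < F 1 := by
    have : 0 < (N : ℝ) - 1 + σ := by linarith
    rw [hF1]; positivity
  constructor
  · have key : F 1 / N - 1 * (1 - σ) * (((N : ℝ) - 2 + 1) * ρ 1 + 1) = N * σ * ρ 1 := by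
      rw [hF1, mul_div_cancel_left₀ _ hNpos.ne']; ring
    rw [hEin, key]; positivity
  · have key : 1 * ((N : ℝ) - 1 + 1) * (1 - σ) + (1 - 1) * ((N : ℝ) - 2 + 1 + 1 * σ) * ρ 1
        = N * (1 - σ) := by ring
    rw [hEout, key]; positivity
end

section
/- For every σ > 0, E″_out(k) tends to −∞ as the integer k tends to ∞. -/
/-!
Write `A = N - 2 + k + kσ ≥ k` and `M = |1 - σ|`. Since `0 < R < 1`, `ρ(k) → ∞`, so the terms
carrying the factor `ρ` dominate: `0 < F ≤ 2 N A ρ`, and the second factor of `E''_out` is at most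
`-(k - 1) A ρ / 2`. Hence `E''_out(k) ≤ -(k - 1) / (2 N²)` for large `k`, whatever the sign
of `1 - σ`.
-/

open Filter

/-- The quantitative bound: once `ρ` dominates `|1 - σ|` and `k ≥ N`, the coefficient is at most
`-(k - 1) / (2 n²)`. Here `n` is the dimension and `r` the value `ρ(k)`. -/
theorem Eout_le (n σ k r : ℝ) (hn : 2 ≤ n) (hσ : 0 < σ) (hk : n ≤ k)
    (hr : 8 * |1 - σ| + 1 ≤ r) :
    2 / (n * (n * (n - 2 + k + k * σ) * r + k * n * (1 - σ)))
        * (k * (n - 1 + k) * (1 - σ) + (1 - k) * (n - 2 + k + k * σ) * r)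
      ≤ -((k - 1) / (2 * n ^ 2)) := by
  have hkσ : 0 < k * σ := mul_pos (by linarith) hσ
  obtain ⟨A, hA⟩ : ∃ A, A = n - 2 + k + k * σ := ⟨_, rfl⟩
  obtain ⟨M, hM⟩ : ∃ M, M = |1 - σ| := ⟨_, rfl⟩
  have hM0 : 0 ≤ M := hM ▸ abs_nonneg _
  have h1 : 1 - σ ≤ M := hM ▸ le_abs_self _
  have h2 : -M ≤ 1 - σ := hM ▸ neg_abs_le _
  have hAk : k ≤ A := by linarith
  have hk0 : 0 < k := by linarith
  have hA0 : 0 < A := by linarith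
  have hn0 : 0 < n := by linarith
  rw [← hM] at hr
  rw [← hA]
  have hr0 : 0 < r := by linarith
  have hkM : k * M ≤ A * M := mul_le_mul_of_nonneg_right hAk hM0
  have hlow : -(A * M) ≤ k * (1 - σ) := by nlinarith
  have hup : k * (1 - σ) ≤ A * M := by nlinarith
  have hMr : A * M < A * r := mul_lt_mul_of_pos_left (by linarith) hA0
  have hF0 : 0 < n * A * r + k * n * (1 - σ) := by
    have : 0 < n * (A * r + k * (1 - σ)) := mul_pos hn0 (by linarith)
    linarith
  have hF1 : n * A * r + k * n * (1 - σ) ≤ 2 * n * A * r := by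
    have : n * (k * (1 - σ)) ≤ n * (A * r) := mul_le_mul_of_nonneg_left (by linarith) hn0.le
    linarith
  have hP : k * (n - 1 + k) * (1 - σ) + (1 - k) * A * r ≤ -((k - 1) * A * r / 2) := by
    -- `k (n - 1 + k) ≤ 2 k² ≤ 4 (k - 1) A`, using `n ≤ k` and `2 ≤ k`
    have e1 : (n - 1 + k) * (k * (1 - σ)) ≤ (n - 1 + k) * (A * M) :=
      mul_le_mul_of_nonneg_left hup (by linarith)
    have e2 : (n - 1 + k) * (A * M) ≤ (4 * (k - 1)) * (A * M) :=
      mul_le_mul_of_nonneg_right (by linarith) (mul_nonneg hA0.le hM0)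
    have e3 : ((k - 1) * A) * (8 * M) ≤ ((k - 1) * A) * r :=
      mul_le_mul_of_nonneg_left (by linarith) (mul_nonneg (by linarith) hA0.le)
    linarith
  have hd : 0 < n * (n * A * r + k * n * (1 - σ)) := mul_pos hn0 hF0
  rw [div_mul_eq_mul_div, div_le_iff₀ hd]
  have hc : 0 ≤ (k - 1) / (2 * n ^ 2) := div_nonneg (by linarith) (by positivity)
  have h3 : (k - 1) / (2 * n ^ 2) * (n * (n * A * r + k * n * (1 - σ)))
      ≤ (k - 1) / (2 * n ^ 2) * (n * (2 * n * A * r)) :=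
    mul_le_mul_of_nonneg_left (mul_le_mul_of_nonneg_left hF1 hn0.le) hc
  have h4 : (k - 1) / (2 * n ^ 2) * (n * (2 * n * A * r)) = (k - 1) * A * r := by
    field_simp
  linarith

/-- For every `σ > 0`, `E''_out(k)` tends to `-∞` as the integer `k` tends to `∞`. -/
theorem Eout_tendsto_atBot (N : ℕ) (hN : 2 ≤ N) (σ R : ℝ) (hσ : 0 < σ)
    (hR0 : 0 < R) (hR1 : R < 1)
    (ρ F Eout : ℝ → ℝ)
    (hρ : ∀ k, ρ k = R ^ ((2 : ℝ) - N - 2 * k))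
    (hF : ∀ k, F k = (N : ℝ) * ((N : ℝ) - 2 + k + k * σ) * ρ k + k * N * (1 - σ))
    (hEout : ∀ k, Eout k = (2 / (N * F k))
        * (k * ((N : ℝ) - 1 + k) * (1 - σ) + (1 - k) * ((N : ℝ) - 2 + k + k * σ) * ρ k)) :
    Tendsto (fun k : ℕ => Eout k) atTop atBot := by
  have hN' : (2 : ℝ) ≤ N := by exact_mod_cast hN
  have hk : Tendsto (fun k : ℕ => (k : ℝ)) atTop atTop := tendsto_natCast_atTop_atTop
  have hρt : Tendsto (fun k : ℕ => ρ k) atTop atTop := by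
    have he : Tendsto (fun k : ℕ => (2 : ℝ) - N - 2 * k) atTop atBot := by
      simp only [sub_eq_add_neg _ ((2 : ℝ) * _)]
      exact tendsto_atBot_add_const_left _ _
        (tendsto_neg_atTop_atBot.comp (hk.const_mul_atTop (by norm_num)))
    simp only [hρ]
    exact (tendsto_rpow_atBot_of_base_lt_one R hR0 hR1).comp he
  have hlim : Tendsto (fun k : ℕ => -(((k : ℝ) - 1) / (2 * (N : ℝ) ^ 2))) atTop atBot :=
    tendsto_neg_atTop_atBot.comp
      ((tendsto_atTop_add_const_right _ (-1) hk).atTop_div_const (by positivity))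
  refine tendsto_atBot_mono' _ ?_ hlim
  filter_upwards [hρt.eventually_ge_atTop (8 * |1 - σ| + 1), hk.eventually_ge_atTop (N : ℝ)]
    with k hr hkN
  rw [hEout, hF]
  exact Eout_le N σ k (ρ k) hN' hσ hkN hr
end

section
/- For every σ > 0 with σ ≠ 1, E″_in(k) tends to −∞ as the integer k tends to ∞. -/
open Filter

/-!
For `k ≥ 1`, `ρ k > 1` gives `F k > 0`, and with `G k = (N - 2 + k) ρ k + k` the definition reads
`Ein k = A - B * (k * (G k / F k))`, where `A` and `B` do not depend on `k` and
`B = 2 R ^ N (1 - σ) ^ 2 / (N σ) > 0` because `σ ≠ 1`. Termwise comparison gives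
`F k ≤ N (1 + σ) G k`, so `Ein k` is at most an affine function of `k` with negative slope.
-/

/-- With `p > 1` in the role of `ρ k` and `P` in that of `R ^ N`, the coefficient is bounded by an
affine function of `k`. -/
lemma coefficient_le_affine {n σ P p k F : ℝ} (hn : 2 ≤ n) (hσ : 0 < σ)
    (hP : 0 < P) (hp : 1 < p) (hk : 1 ≤ k)
    (hF : F = n * (n - 2 + k + k * σ) * p + k * n * (1 - σ)) :
    (2 * P * (1 - σ) / (n * σ * F)) * (F / n - k * (1 - σ) * ((n - 2 + k) * p + k))
      ≤ 2 * P * (1 - σ) / (n ^ 2 * σ)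
        - 2 * P * (1 - σ) ^ 2 / (n * σ) * (1 / (n * (1 + σ))) * k := by
  have hn0 : 0 < n := by linarith
  have hk0 : 0 < k := by linarith
  have hm : 0 ≤ n - 2 := by linarith
  have hFpos : 0 < F := by
    have h1 : F = n * ((n - 2) * p + k * (p + 1 + σ * (p - 1))) := by rw [hF]; ring
    have h2 : 0 < p - 1 := by linarith
    rw [h1]
    positivity
  have hFle : F ≤ n * (1 + σ) * ((n - 2 + k) * p + k) := by
    have h1 : n * (1 + σ) * ((n - 2 + k) * p + k) - F
        = n * σ * (n - 2) * p + 2 * (n * k * σ) := by rw [hF]; ring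
    have h2 : 0 ≤ n * σ * (n - 2) * p + 2 * (n * k * σ) := by positivity
    linarith
  have hratio : 1 / (n * (1 + σ)) ≤ ((n - 2 + k) * p + k) / F := by
    rw [div_le_div_iff₀ (by positivity) hFpos]
    linarith
  have hsplit : (2 * P * (1 - σ) / (n * σ * F))
        * (F / n - k * (1 - σ) * ((n - 2 + k) * p + k))
      = 2 * P * (1 - σ) / (n ^ 2 * σ)
        - 2 * P * (1 - σ) ^ 2 / (n * σ) * (((n - 2 + k) * p + k) / F) * k := by
    clear hF hFle hratio
    field_simp
  rw [hsplit]
  gcongr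

/-- For every `σ > 0` with `σ ≠ 1`, `E''_in(k)` tends to `-∞` as the integer `k`
tends to `∞`. -/
theorem Ein_tendsto_atBot (N : ℕ) (hN : 2 ≤ N) (σ R : ℝ) (hσ : 0 < σ) (hσ1 : σ ≠ 1)
    (hR0 : 0 < R) (hR1 : R < 1)
    (ρ F Ein : ℝ → ℝ)
    (hρ : ∀ k, ρ k = R ^ ((2 : ℝ) - N - 2 * k))
    (hF : ∀ k, F k = (N : ℝ) * ((N : ℝ) - 2 + k + k * σ) * ρ k + k * N * (1 - σ))
    (hEin : ∀ k, Ein k = (2 * R ^ N * (1 - σ) / (N * σ * F k))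
        * (F k / N - k * (1 - σ) * (((N : ℝ) - 2 + k) * ρ k + k))) :
    Tendsto (fun k : ℕ => Ein k) atTop atBot := by
  have hn : (2 : ℝ) ≤ N := by exact_mod_cast hN
  have hslope : 0 < 2 * R ^ N * (1 - σ) ^ 2 / (N * σ) * (1 / (N * (1 + σ))) := by
    have h1 : 0 < (1 - σ) ^ 2 := by
      have : 1 - σ ≠ 0 := sub_ne_zero.mpr hσ1.symm
      positivity
    have h2 : (0 : ℝ) < N := by linarith
    positivity
  refine tendsto_atBot_mono' atTop (f₁ := fun k : ℕ => 2 * R ^ N * (1 - σ) / ((N : ℝ) ^ 2 * σ)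
    - 2 * R ^ N * (1 - σ) ^ 2 / (N * σ) * (1 / (N * (1 + σ))) * (k : ℝ)) ?_ ?_
  · filter_upwards [eventually_ge_atTop 1] with k hk
    have hk1 : (1 : ℝ) ≤ k := by exact_mod_cast hk
    have hρ1 : 1 < ρ k := by
      rw [hρ]
      exact Real.one_lt_rpow_of_pos_of_lt_one_of_neg hR0 hR1 (by linarith)
    rw [hEin]
    exact coefficient_le_affine hn hσ (pow_pos hR0 N) hρ1 hk1 (hF k)
  · have h := tendsto_natCast_atTop_atTop (R := ℝ).const_mul_atTop hslope
    simpa only [sub_eq_add_neg, Function.comp_apply] using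
      tendsto_atBot_add_const_left atTop _ (tendsto_neg_atTop_atBot.comp h)
end

section
/- Suppose σ > 1. Then for every integer k ≥ 1 and every real number t one has E″_in(k)·t² + E″_res(k)·t + E″_out(k) ≤ 0, and equality holds if and only if k = 1 and t = 1. Consequently, for σ > 1, simultaneous degree-k spherical-harmonic perturbations of the interface (with amplitude t) and of the outer boundary (with amplitude 1) never make the second derivative of the torsional rigidity positive, and make it zero only for the translation-like perturbation k = 1, t = 1. -/
/-!
Write `d = σ - 1`, `m = N - 2 + 2k`, `P = ρ(k)` and `G = F(k) / N = m P + k d (P - 1) > 0`. Then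
`E''_in t² + E''_res t + E''_out = (2 / (N² G)) (-a t² + 2 b t - C)` with `a > 0`.
For `k = 1` the bracket is `-d N (t - 1)²`. For `k ≥ 2` it is negative because `b² < a C`; after
using `(R^(1-k))² = ρ(k) R^N`, this is `disc_lt` below. The inequality holds because the
difference of its two sides is `P (k - 1) m² + (P - 1) (k - 1) H` with `H > 0`.
-/

/-- The strict discriminant bound for `k > 1`, with `d = σ - 1`, `u = N - 2` and `P = ρ(k)`. -/
lemma disc_lt (u d k P : ℝ) (hu : 0 ≤ u) (hd : 0 < d) (hk : 1 < k) (hP : 1 < P) :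
    (1 + d) * d * k ^ 2 * (u + 2 * k) ^ 2 * P <
      (P * (u + 2 * k + k * d * (u + k + 1)) + k * (k - 1) * d) *
        (k * (u + k + 1) * d + (k - 1) * (u + 2 * k + k * d) * P) := by
  have hk1 : 0 < k - 1 := by linarith
  have hP1 : 0 < P - 1 := by linarith
  have hk0 : 0 < k := by linarith
  have hP0 : 0 < P := by linarith
  have key : 0 < P * (k - 1) * (u + 2 * k) ^ 2 + (P - 1) * (k - 1) *
      ((u + 2 * k) * (u + 2 * k + k * d + k * d * (u + k + 1)) * P
        + k ^ 2 * (u + k + 1) * d ^ 2 * (P - 1)) := by positivity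
  linear_combination key

/-- A quadratic with negative leading coefficient and negative discriminant is negative. -/
lemma quad_neg (a b c t : ℝ) (ha : 0 < a) (h : b ^ 2 < a * c) :
    -a * t ^ 2 + 2 * b * t - c < 0 := by
  have h1 : a * (-a * t ^ 2 + 2 * b * t - c) < 0 := by nlinarith [sq_nonneg (a * t - b)]
  exact neg_of_mul_neg_right h1 ha.le


/-- Suppose `σ > 1`. Then for every integer `k ≥ 1` and every real `t` one has
`E''_in(k) t² + E''_res(k) t + E''_out(k) ≤ 0`, with equality if and only if
`k = 1` and `t = 1`. Consequently, simultaneous degree-`k` spherical-harmonic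
perturbations of the interface (amplitude `t`) and of the outer boundary
(amplitude `1`) never make the second derivative of the torsional rigidity positive,
and make it zero only for the translation-like perturbation `k = 1`, `t = 1`. -/
theorem quadratic_nonpos_of_sigma_gt_one (N : ℕ) (hN : 2 ≤ N) (σ R : ℝ) (hσ : 1 < σ)
    (hR0 : 0 < R) (hR1 : R < 1)
    (ρ F Ein Eout Eres : ℝ → ℝ)
    (hρ : ∀ k, ρ k = R ^ ((2 : ℝ) - N - 2 * k))
    (hF : ∀ k, F k = (N : ℝ) * ((N : ℝ) - 2 + k + k * σ) * ρ k + k * N * (1 - σ))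
    (hEin : ∀ k, Ein k = (2 * R ^ N * (1 - σ) / (N * σ * F k))
        * (F k / N - k * (1 - σ) * (((N : ℝ) - 2 + k) * ρ k + k)))
    (hEout : ∀ k, Eout k = (2 / (N * F k))
        * (k * ((N : ℝ) - 1 + k) * (1 - σ) + (1 - k) * ((N : ℝ) - 2 + k + k * σ) * ρ k))
    (hEres : ∀ k, Eres k = (4 * (σ - 1) * R ^ ((1 : ℝ) - k) / (N * F k))
        * (((N : ℝ) - 2) * k + 2 * k ^ 2)) :
    ∀ k : ℕ, 1 ≤ k → ∀ t : ℝ,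
      Ein k * t ^ 2 + Eres k * t + Eout k ≤ 0
      ∧ (Ein k * t ^ 2 + Eres k * t + Eout k = 0 ↔ k = 1 ∧ t = 1) := by
  intro k hk t
  have hn : (2 : ℝ) ≤ N := by exact_mod_cast hN
  have hk1 : (1 : ℝ) ≤ k := by exact_mod_cast hk
  have hP : 1 < ρ k := by
    rw [hρ]
    exact Real.one_lt_rpow_of_pos_of_lt_one_of_neg hR0 hR1 (by linarith)
  have hq : (R ^ ((1 : ℝ) - k)) ^ 2 = ρ k * R ^ N := by
    rw [hρ, ← Real.rpow_natCast R N, ← Real.rpow_add hR0, ← Real.rpow_natCast, ← Real.rpow_mul hR0.le]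
    congr 1
    push_cast
    ring
  have hr : 0 < R ^ N := pow_pos hR0 N
  have hq1 : k = 1 → R ^ ((1 : ℝ) - k) = 1 := by
    rintro rfl
    simp
  rw [hEin, hEres, hEout, hF]
  generalize R ^ ((1 : ℝ) - k) = q at *
  generalize R ^ N = r at *
  generalize ρ k = P at *
  obtain ⟨d, rfl⟩ : ∃ d, σ = 1 + d := ⟨σ - 1, by ring⟩
  obtain ⟨u, hu⟩ : ∃ u : ℝ, (N : ℝ) = u + 2 := ⟨N - 2, by ring⟩
  rw [hu] at hn ⊢
  have hd : 0 < d := by linarith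
  have hu0 : 0 ≤ u := by linarith
  have hs : 0 < 1 + d := by linarith
  have hu2 : 0 < u + 2 := by linarith
  have hP1 : 0 < P - 1 := by linarith
  have hP0 : 0 < P := by linarith
  have hk10 : (0 : ℝ) ≤ k - 1 := by linarith
  have hk0 : (0 : ℝ) < k := by linarith
  set G : ℝ := (u + 2 * k) * P + k * d * (P - 1) with hG
  have hG0 : 0 < G := by positivity
  have hFG : (u + 2) * (u + 2 - 2 + k + k * (1 + d)) * P + k * (u + 2) * (1 - (1 + d))
      = (u + 2) * G := by rw [hG]; ring
  rw [hFG]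
  set A : ℝ := P * (u + 2 * k + k * d * (u + k + 1)) + k * (k - 1) * d with hA
  have hA0 : 0 < A := by positivity
  set C : ℝ := k * (u + k + 1) * d + (k - 1) * (u + 2 * k + k * d) * P with hC
  have hE : 2 * r * (1 - (1 + d)) / ((u + 2) * (1 + d) * ((u + 2) * G)) *
        ((u + 2) * G / (u + 2) - k * (1 - (1 + d)) * ((u + 2 - 2 + k) * P + k)) * t ^ 2 +
      4 * (1 + d - 1) * q / ((u + 2) * ((u + 2) * G)) * ((u + 2 - 2) * k + 2 * (k : ℝ) ^ 2) * t +
      2 / ((u + 2) * ((u + 2) * G)) *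
        (k * (u + 2 - 1 + k) * (1 - (1 + d)) + (1 - k) * (u + 2 - 2 + k + k * (1 + d)) * P)
      = 2 / ((u + 2) ^ 2 * G) *
        (-(r * d * A / (1 + d)) * t ^ 2 + 2 * (d * q * k * (u + 2 * k)) * t - C) := by
    have hGA : (u + 2) * G / (u + 2) - k * (1 - (1 + d)) * ((u + 2 - 2 + k) * P + k) = A := by
      rw [mul_div_cancel_left₀ _ hu2.ne', hG, hA]
      ring
    rw [hGA, hC]
    clear_value A G
    field_simp
    ring
  rw [hE]
  have hc : 0 < 2 / ((u + 2) ^ 2 * G) := by positivity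
  rcases hk.eq_or_lt with h1 | h1
  · subst h1
    -- For `k = 1` the relation `q ^ 2 = P * r` gives `P * r = 1`, so the bracket is a square.
    have hq' : q = 1 := hq1 rfl
    have hPr : P * r = 1 := by rw [← hq, hq']; norm_num
    have hAr : r * d * A / (1 + d) = d * (u + 2) := by
      rw [div_eq_iff hs.ne', hA]
      push_cast
      linear_combination d * (u + 2) * (1 + d) * hPr
    have hQ : -(r * d * A / (1 + d)) * t ^ 2 + 2 * (d * q * (1 : ℕ) * (u + 2 * (1 : ℕ))) * t - C
        = -(d * (u + 2) * (t - 1) ^ 2) := by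
      rw [hAr, hC, hq']
      push_cast
      ring
    rw [hQ]
    refine ⟨mul_nonpos_of_nonneg_of_nonpos hc.le (neg_nonpos.2 (by positivity)), ?_⟩
    simp [hc.ne', hd.ne', hu2.ne', sub_eq_zero]
  · have hk1' : (1 : ℝ) < k := by exact_mod_cast h1
    have hdisc := disc_lt u d k P hu0 hd hk1' hP
    rw [← hA, ← hC] at hdisc
    have hneg := quad_neg (r * d * A / (1 + d)) (d * q * k * (u + 2 * k)) C t (by positivity) (by
      rw [div_mul_eq_mul_div, lt_div_iff₀ hs]
      have h2 := mul_lt_mul_of_pos_left hdisc (mul_pos hr hd)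
      linear_combination h2 + d ^ 2 * k ^ 2 * (u + 2 * k) ^ 2 * (1 + d) * hq)
    have hlt := mul_neg_of_pos_of_neg hc hneg
    exact ⟨hlt.le, fun h => absurd h hlt.ne, fun h => absurd h.1 (by omega)⟩
end

section
/- Suppose σ > 1. Then for every integer k ≥ 2 the discriminant of the quadratic t ↦ E″_in(k)·t² + E″_res(k)·t + E″_out(k) is strictly negative: E″_res(k)² < 4·E″_in(k)·E″_out(k). -/
/-!
Put `s = σ - 1 > 0`, `j = k - 1 > 0`, `Q = N - 1 + k` and `P = N - 2 + 2k = Q + j`. Since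
`(R ^ (1 - k))² = R ^ N ρ(k)`, the common factor `16 R ^ N s / (N² σ F(k)²)` of both sides drops out,
and the claim reduces to the polynomial inequality `s σ ρ k² P² < A B`, where
`A = ρ P + ρ k s Q + k s j` and `B = k Q s + j P ρ + j k s ρ`.
Comparing coefficients of powers of `s`, the difference `A B - s σ ρ k² P²` equals
`j P² ρ² + k ρ P s (ρ - 1) j (1 + Q) + k² s² Q j (ρ - 1)²`, which is positive because `ρ(k) > 1`.
-/

/-- The polynomial inequality to which the discriminant bound reduces, with `j = k - 1`,
`Q = N - 1 + k`, `s = σ - 1` and `r = ρ(k)`. -/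
lemma discriminant_core {j Q s r : ℝ} (hj : 0 < j) (hQ : 0 < Q) (hs : 0 < s) (hr : 1 < r) :
    s * (1 + s) * r * (j + 1) ^ 2 * (Q + j) ^ 2 <
      (r * (Q + j) + r * (j + 1) * s * Q + (j + 1) * s * j) *
        ((j + 1) * Q * s + j * (Q + j) * r + j * (j + 1) * s * r) := by
  have hr' : 0 < r - 1 := sub_pos.2 hr
  have hr0 : 0 < r := one_pos.trans hr
  have h : 0 < j * (Q + j) ^ 2 * r ^ 2 + (j + 1) * r * (Q + j) * s * (r - 1) * (j * (1 + Q))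
      + (j + 1) ^ 2 * s ^ 2 * Q * j * (r - 1) ^ 2 := by positivity
  linear_combination h


/-- Suppose `σ > 1`. Then for every integer `k ≥ 2` the discriminant of the quadratic
`t ↦ E''_in(k) t² + E''_res(k) t + E''_out(k)` is strictly negative:
`E''_res(k)² < 4 E''_in(k) E''_out(k)`. -/
theorem discriminant_neg_of_sigma_gt_one (N : ℕ) (hN : 2 ≤ N) (σ R : ℝ) (hσ : 1 < σ)
    (hR0 : 0 < R) (hR1 : R < 1)
    (ρ F Ein Eout Eres : ℝ → ℝ)
    (hρ : ∀ k, ρ k = R ^ ((2 : ℝ) - N - 2 * k))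
    (hF : ∀ k, F k = (N : ℝ) * ((N : ℝ) - 2 + k + k * σ) * ρ k + k * N * (1 - σ))
    (hEin : ∀ k, Ein k = (2 * R ^ N * (1 - σ) / (N * σ * F k))
        * (F k / N - k * (1 - σ) * (((N : ℝ) - 2 + k) * ρ k + k)))
    (hEout : ∀ k, Eout k = (2 / (N * F k))
        * (k * ((N : ℝ) - 1 + k) * (1 - σ) + (1 - k) * ((N : ℝ) - 2 + k + k * σ) * ρ k))
    (hEres : ∀ k, Eres k = (4 * (σ - 1) * R ^ ((1 : ℝ) - k) / (N * F k))
        * (((N : ℝ) - 2) * k + 2 * k ^ 2)) :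
    ∀ k : ℕ, 2 ≤ k → (Eres k) ^ 2 < 4 * Ein k * Eout k := by
  intro k hk
  have hk' : (2 : ℝ) ≤ k := by exact_mod_cast hk
  have hN' : (2 : ℝ) ≤ N := by exact_mod_cast hN
  have hr : 1 < ρ k := by
    rw [hρ]
    exact Real.one_lt_rpow_of_pos_of_lt_one_of_neg hR0 hR1 (by linarith)
  have hpow : (R ^ ((1 : ℝ) - k)) ^ 2 = R ^ N * ρ k := by
    rw [hρ, ← Real.rpow_natCast R N, ← Real.rpow_natCast (R ^ ((1 : ℝ) - k)) 2,
      ← Real.rpow_mul hR0.le, ← Real.rpow_add hR0]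
    congr 1
    push_cast
    ring
  have hcore := discriminant_core (j := (k : ℝ) - 1) (Q := (N : ℝ) - 1 + k) (s := σ - 1)
    (by linarith) (by linarith) (by linarith) hr
  rw [hEin, hEout, hEres]
  have hF' := hF k
  have hFpos : 0 < F k := by
    have h : F k = N * ((N - 2 + 2 * k) * ρ k + k * (σ - 1) * (ρ k - 1)) := by
      rw [hF']; ring
    have h1 : 0 < ((N : ℝ) - 2 + 2 * k) * ρ k := mul_pos (by linarith) (by linarith)
    have h2 : 0 ≤ k * (σ - 1) * (ρ k - 1) :=
      mul_nonneg (mul_nonneg (by linarith) (by linarith)) (by linarith)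
    rw [h]
    exact mul_pos (by linarith) (by linarith)
  have hFN : F k / N = ((N : ℝ) - 2 + k + k * σ) * ρ k + k * (1 - σ) := by
    rw [hF']
    field_simp
  rw [hFN]
  have hNpos : (0 : ℝ) < N := by linarith
  have hσ0 : 0 < σ := by linarith
  have hσ1 : 0 < σ - 1 := by linarith
  -- The common factor of the two sides.
  have hC : 0 < 16 * R ^ N * (σ - 1) / (N ^ 2 * σ * F k ^ 2) := by positivity
  have key := mul_lt_mul_of_pos_left hcore hC
  refine lt_of_eq_of_lt ?_ (key.trans_eq ?_)
  · rw [mul_pow, div_pow, mul_pow (4 * (σ - 1)), hpow]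
    field_simp
    ring
  · field_simp
    ring
end

section
/- Let L > 1 and set λ = log L. For all real numbers M ≥ 0 and x > 0, writing P = L^(2x+M), one has a(x) := x²P⁻¹ + M(2x + M) − (x + M)²P − 2λ(2x³ + 3Mx² + M²x) < 0. -/
/-!
With `y = x + M` one has `M (2x + M) = y² - x²` and `2x³ + 3Mx² + M²x = x y (2x + M)`, so
`a(x) = -x² (1 - P⁻¹) - y² (P - 1) - 2 λ x y (2x + M)`,
and every summand is negative because `P > 1` and `λ > 0`.
-/

/-- Let `L > 1` and `λ = log L`. For all reals `M ≥ 0` and `x > 0`, writing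
`P = L^(2x+M)`, one has
`a(x) = x² P⁻¹ + M (2x + M) - (x + M)² P - 2λ (2x³ + 3Mx² + M²x) < 0`. -/
theorem a_neg (L : ℝ) (hL : 1 < L) :
    ∀ M x : ℝ, 0 ≤ M → 0 < x →
      x ^ 2 * (L ^ (2 * x + M))⁻¹ + M * (2 * x + M)
        - (x + M) ^ 2 * L ^ (2 * x + M)
        - 2 * Real.log L * (2 * x ^ 3 + 3 * M * x ^ 2 + M ^ 2 * x) < 0 := by
  intro M x hM hx
  have hP : 1 < L ^ (2 * x + M) := Real.one_lt_rpow hL (by positivity)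
  have hlog : 0 < Real.log L := Real.log_pos hL
  generalize L ^ (2 * x + M) = P at hP ⊢
  have h1 : 0 < x ^ 2 * (1 - P⁻¹) := mul_pos (by positivity) (sub_pos.2 (inv_lt_one_of_one_lt₀ hP))
  have h2 : 0 < (x + M) ^ 2 * (P - 1) := mul_pos (by positivity) (sub_pos.2 hP)
  have h3 : 0 < 2 * Real.log L * (x * (x + M) * (2 * x + M)) := by positivity
  linarith
end

section
/- Let L > 1 and set λ = log L. For all real numbers M ≥ 0 and x > 0, writing P = L^(2x+M), one has b(x) := −2x²P⁻¹ − M(2x + M) − 2(Mx + x²)P + 2λM(Mx + 2x²) < 0; indeed the auxiliary quantity b̃(x) = −(M + x)P + λM(M + 2x) satisfies b̃(x) < 0 for x > 0 and b(x) = −2x²P⁻¹ − M(2x + M) + 2x·b̃(x). -/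
/-!
With `s = (2x + M) log L` one has `P = exp s > s`, hence `M s ≤ M P < (M + x) P`, which is
`b̃(x) < 0`. The decomposition of `b` is an algebraic identity, and each of its remaining terms
is nonpositive, so `b(x) < 0` follows from the sign of `b̃(x)`.
-/

/-- Let `L > 1` and `λ = log L`. For all reals `M ≥ 0` and `x > 0`, writing
`P = L^(2x+M)`, one has
`b(x) = -2x² P⁻¹ - M (2x + M) - 2 (Mx + x²) P + 2λ M (Mx + 2x²) < 0`;
indeed the auxiliary quantity `b̃(x) = -(M + x) P + λ M (M + 2x)` satisfies
`b̃(x) < 0` for `x > 0`, and `b(x) = -2x² P⁻¹ - M (2x + M) + 2x b̃(x)`. -/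
theorem b_neg (L : ℝ) (hL : 1 < L) :
    ∀ M x : ℝ, 0 ≤ M → 0 < x →
      (-(2 * x ^ 2) * (L ^ (2 * x + M))⁻¹ - M * (2 * x + M)
          - 2 * (M * x + x ^ 2) * L ^ (2 * x + M)
          + 2 * Real.log L * M * (M * x + 2 * x ^ 2) < 0)
      ∧ (-(M + x) * L ^ (2 * x + M) + Real.log L * M * (M + 2 * x) < 0)
      ∧ (-(2 * x ^ 2) * (L ^ (2 * x + M))⁻¹ - M * (2 * x + M)
            - 2 * (M * x + x ^ 2) * L ^ (2 * x + M)
            + 2 * Real.log L * M * (M * x + 2 * x ^ 2)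
          = -(2 * x ^ 2) * (L ^ (2 * x + M))⁻¹ - M * (2 * x + M)
            + 2 * x * (-(M + x) * L ^ (2 * x + M) + Real.log L * M * (M + 2 * x))) := by
  intro M x hM hx
  have hP : 0 < L ^ (2 * x + M) := Real.rpow_pos_of_pos (by linarith) _
  have hs : Real.log L * (2 * x + M) + 1 ≤ L ^ (2 * x + M) := by
    rw [Real.rpow_def_of_pos (by linarith)]
    exact Real.add_one_le_exp _
  set P := L ^ (2 * x + M)
  have htilde : -(M + x) * P + Real.log L * M * (M + 2 * x) < 0 := by
    have h1 : M * (Real.log L * (2 * x + M)) ≤ M * P :=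
      mul_le_mul_of_nonneg_left (by linarith) hM
    have h2 : 0 < x * P := mul_pos hx hP
    linarith
  have hid : -(2 * x ^ 2) * P⁻¹ - M * (2 * x + M) - 2 * (M * x + x ^ 2) * P
        + 2 * Real.log L * M * (M * x + 2 * x ^ 2)
      = -(2 * x ^ 2) * P⁻¹ - M * (2 * x + M)
        + 2 * x * (-(M + x) * P + Real.log L * M * (M + 2 * x)) := by
    ring
  refine ⟨?_, htilde, hid⟩
  rw [hid]
  have h1 : 0 ≤ 2 * x ^ 2 * P⁻¹ := by positivity
  have h2 : 0 ≤ M * (2 * x + M) := by positivity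
  have h3 := mul_neg_of_pos_of_neg (by positivity : 0 < 2 * x) htilde
  linarith
end
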